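/- arXiv:0906.3851 — 12 statements merged into one kernel-verified Lean document; each statement's English description precedes it below -/
import Mathlib

section
/- (Theorem 3.3) Let ψ : ℝ → ℝ³ be a curve with ψ' = T, where T, N, B : ℝ → ℝ³ are differentiable maps and κ, τ : ℝ → ℝ are differentiable functions with κ(s) ≠ 0 and τ(s) ≠ 0 for all s, satisfying the Frenet equations T' = κ·N, N' = κ·T + τ·B, B' = −τ·N. Then ψ satisfies the fourth-order vector differential equation (d/ds)[ (1/τ)·(d/ds)( (1/κ)·ψ'' ) ](s) + (τ(s)/κ(s) − κ(s)/τ(s))·ψ''(s) − (κ/τ)'(s)·ψ'(s) = 0 for all s. -/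
/-- The Minkowski metric on `ℝ³`: `g(v,w) = -v₀w₀ + v₁w₁ + v₂w₂`. -/
def g (v w : Fin 3 → ℝ) : ℝ := -(v 0 * w 0) + v 1 * w 1 + v 2 * w 2

/-- Theorem 3.3: the position vector of a time-like unit speed curve satisfies a
fourth-order vector differential equation. -/
theorem position_vector_fourth_order_ODE (ψ T N B : ℝ → Fin 3 → ℝ) (κ τ : ℝ → ℝ)
    (hT : Differentiable ℝ T) (hN : Differentiable ℝ N) (hB : Differentiable ℝ B)
    (hκ : Differentiable ℝ κ) (hτ : Differentiable ℝ τ)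
    (hκ0 : ∀ s, κ s ≠ 0) (hτ0 : ∀ s, τ s ≠ 0)
    (hψ : ∀ s, deriv ψ s = T s)
    (frenet1 : ∀ s, deriv T s = κ s • N s)
    (frenet2 : ∀ s, deriv N s = κ s • T s + τ s • B s)
    (frenet3 : ∀ s, deriv B s = -(τ s) • N s) :
    ∀ s, deriv (fun u => (τ u)⁻¹ • deriv (fun v => (κ v)⁻¹ • deriv (deriv ψ) v) u) s
        + (τ s / κ s - κ s / τ s) • deriv (deriv ψ) s
        - deriv (fun u => κ u / τ u) s • deriv ψ s = 0 := by
  -- The Frenet equations turn the inner expressions into `N` and then `(κ/τ) T + B`.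
  have h2 : deriv ψ = T := funext hψ
  have h3 : (fun v => (κ v)⁻¹ • deriv T v) = N := by
    funext v
    rw [frenet1, inv_smul_smul₀ (hκ0 v)]
  have h4 : (fun u => (τ u)⁻¹ • deriv N u) = fun u => (κ u / τ u) • T u + B u := by
    funext u
    rw [frenet2, smul_add, inv_smul_smul₀ (hτ0 u), smul_smul, div_eq_inv_mul]
  intro s
  have hq : DifferentiableAt ℝ (fun u => κ u / τ u) s := (hκ s).div (hτ s) (hτ0 s)
  have h5 : deriv (fun u => (κ u / τ u) • T u + B u) s
      = ((κ s / τ s) • deriv T s + deriv (fun u => κ u / τ u) s • T s) + deriv B s :=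
    ((hq.hasDerivAt.smul (hT s).hasDerivAt).add (hB s).hasDerivAt).deriv
  rw [h2, h3, h4, h5, frenet1, frenet3]
  -- The `T`-terms cancel, and the coefficient of `N` is `κ²/τ - τ + (τ/κ - κ/τ) κ = 0`.
  have hκs := hκ0 s
  have hc : (τ s / κ s - κ s / τ s) * κ s = τ s - κ s / τ s * κ s := by
    field_simp
  rw [smul_smul, smul_smul, hc]
  module
end

section
/- Let T, N, B : ℝ → ℝ³ be differentiable maps and κ, τ : ℝ → ℝ differentiable functions with κ(s) ≠ 0 and τ(s) ≠ 0 for all s, satisfying the Frenet equations T' = κ·N, N' = κ·T + τ·B, B' = −τ·N. Then the tangent T satisfies the third-order vector differential equation (d/ds)[ (1/τ)·(d/ds)( (1/κ)·T' ) ](s) + (τ(s)/κ(s) − κ(s)/τ(s))·T'(s) − (κ/τ)'(s)·T(s) = 0 for all s. -/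
/-- The tangent of a time-like curve satisfies a third-order vector differential
equation. -/
theorem tangent_third_order_ODE (T N B : ℝ → Fin 3 → ℝ) (κ τ : ℝ → ℝ)
    (hT : Differentiable ℝ T) (hN : Differentiable ℝ N) (hB : Differentiable ℝ B)
    (hκ : Differentiable ℝ κ) (hτ : Differentiable ℝ τ)
    (hκ0 : ∀ s, κ s ≠ 0) (hτ0 : ∀ s, τ s ≠ 0)
    (frenet1 : ∀ s, deriv T s = κ s • N s)
    (frenet2 : ∀ s, deriv N s = κ s • T s + τ s • B s)
    (frenet3 : ∀ s, deriv B s = -(τ s) • N s) :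
    ∀ s, deriv (fun u => (τ u)⁻¹ • deriv (fun v => (κ v)⁻¹ • deriv T v) u) s
        + (τ s / κ s - κ s / τ s) • deriv T s
        - deriv (fun u => κ u / τ u) s • T s = 0 := by
  -- `T' / κ = N`
  have h1 : (fun v => (κ v)⁻¹ • deriv T v) = N := by
    funext v
    rw [frenet1, smul_smul, inv_mul_cancel₀ (hκ0 v), one_smul]
  -- `N' / τ = (κ / τ) T + B`
  have h2 : (fun u => (τ u)⁻¹ • deriv N u) = fun u => (κ u / τ u) • T u + B u := by
    funext u
    rw [frenet2, smul_add, smul_smul, smul_smul, inv_mul_cancel₀ (hτ0 u), one_smul,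
      inv_mul_eq_div]
  intro s
  have hq : HasDerivAt (fun u => κ u / τ u) (deriv (fun u => κ u / τ u) s) s :=
    ((hκ s).div (hτ s) (hτ0 s)).hasDerivAt
  have h3 := ((hq.smul (hT s).hasDerivAt).add (hB s).hasDerivAt).deriv
  have h4 : deriv (fun u => (κ u / τ u) • T u + B u) s
      = (κ s / τ s) • deriv T s + deriv (fun u => κ u / τ u) s • T s + deriv B s := h3
  rw [h1, h2, h4, frenet1, frenet3]
  have hk := hκ0 s
  have ht := hτ0 s
  ext i
  simp only [Pi.add_apply, Pi.sub_apply, Pi.smul_apply, Pi.zero_apply, smul_eq_mul]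
  field_simp
  ring
end

section
/- Let T, N, B : ℝ → ℝ³ be differentiable maps and κ : ℝ → ℝ a differentiable function with κ(s) ≠ 0 for all s, and let a ∈ ℝ, a ≠ 0, and set τ = κ/a (so the ratio κ/τ = a is constant). If T' = κ·N, N' = κ·T + τ·B, B' = −τ·N, then T satisfies (d/ds)[ (1/κ)·(d/ds)( (1/κ)·T' ) ](s) + (1/a² − 1)·T'(s) = 0 for all s; equivalently, in the new parameter θ = ∫ κ ds the tangent satisfies d³T/dθ³ + (1/a² − 1)·dT/dθ = 0. -/
/-- For a general helix (`κ/τ = a` constant), the tangent satisfies the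
third-order equation `(d/ds)[(1/κ)(d/ds)((1/κ)T')] + (1/a² − 1)T' = 0`,
equivalently `d³T/dθ³ + (1/a² − 1) dT/dθ = 0` in the parameter `θ = ∫κ ds`. -/
theorem general_helix_tangent_ODE (T N B : ℝ → Fin 3 → ℝ) (κ : ℝ → ℝ) (a : ℝ)
    (hT : Differentiable ℝ T) (hN : Differentiable ℝ N) (hB : Differentiable ℝ B)
    (hκ : Differentiable ℝ κ) (hκ0 : ∀ s, κ s ≠ 0) (ha : a ≠ 0)
    (frenet1 : ∀ s, deriv T s = κ s • N s)
    (frenet2 : ∀ s, deriv N s = κ s • T s + (κ s / a) • B s)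
    (frenet3 : ∀ s, deriv B s = -(κ s / a) • N s) :
    ∀ s, deriv (fun u => (κ u)⁻¹ • deriv (fun v => (κ v)⁻¹ • deriv T v) u) s
        + (1 / a ^ 2 - 1) • deriv T s = 0 := by
  intro s
  have h1 : (fun v => (κ v)⁻¹ • deriv T v) = N := by
    funext v
    rw [frenet1, inv_smul_smul₀ (hκ0 v)]
  have h2 : (fun u => (κ u)⁻¹ • deriv N u) = fun u => T u + a⁻¹ • B u := by
    funext u
    rw [frenet2, div_eq_mul_inv, mul_smul, ← smul_add, inv_smul_smul₀ (hκ0 u)]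
  have h3 : deriv (fun u => T u + a⁻¹ • B u) s = deriv T s + a⁻¹ • deriv B s :=
    ((hT s).hasDerivAt.add ((hB s).hasDerivAt.const_smul a⁻¹)).deriv
  rw [h1, h2, h3, frenet1, frenet3, smul_smul, smul_smul, ← add_smul, ← add_smul]
  have h4 : κ s + a⁻¹ * -(κ s / a) + (1 / a ^ 2 - 1) * κ s = 0 := by
    field_simp
    ring
  rw [h4, zero_smul]
end

section
/- (Theorem 3.4, existence/verification) Let α > 0 and let κ : ℝ → ℝ be continuous with κ(s) > 0 for all s. Define φ(s) = (1/sinh α)·∫₀ˢ κ(u) du and ψ(s) = sinh α · ∫₀ˢ (coth α, cos φ(u), sin φ(u)) du. Set T(s) = (cosh α, sinh α·cos φ(s), sinh α·sin φ(s)), N(s) = (0, −sin φ(s), cos φ(s)), B(s) = −(sinh α, cosh α·cos φ(s), cosh α·sin φ(s)), and τ(s) = coth α · κ(s). Then ψ' = T, the Frenet equations T' = κ·N, N' = κ·T + τ·B, B' = −τ·N hold, and g(T,T) = −1, g(N,N) = g(B,B) = 1, g(T,N) = g(T,B) = g(N,B) = 0 at every s; in particular ψ is a unit-speed time-like general helix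 with curvature κ(s) and torsion τ(s) = coth α · κ(s). -/
theorem hasDerivAt_angle {κ φ : ℝ → ℝ} {c : ℝ} (hκc : Continuous κ)
    (hφ : ∀ s, φ s = c * ∫ u in (0:ℝ)..s, κ u) (s : ℝ) : HasDerivAt φ (c * κ s) s := by
  rw [funext hφ]
  exact (hκc.integral_hasStrictDerivAt 0 s).hasDerivAt.const_mul c

theorem hasDerivAt_vec3 {a b c : ℝ → ℝ} {a' b' c' s : ℝ} (ha : HasDerivAt a a' s)
    (hb : HasDerivAt b b' s) (hc : HasDerivAt c c' s) :
    HasDerivAt (fun s => ![a s, b s, c s]) ![a', b', c'] s := by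
  rw [hasDerivAt_pi]
  intro i
  fin_cases i
  · exact ha
  · exact hb
  · exact hc

/-- Theorem 3.4 (existence/verification): the explicit formula
`ψ(s) = sinh α · ∫₀ˢ (coth α, cos φ(u), sin φ(u)) du`, with
`φ(s) = csch α · ∫₀ˢ κ(u) du`, gives a unit-speed time-like general helix with
curvature `κ` and torsion `τ = coth α · κ`. -/
theorem timelike_general_helix_position_vector (α : ℝ) (hα : 0 < α)
    (κ : ℝ → ℝ) (hκc : Continuous κ) (hκ0 : ∀ s, 0 < κ s)
    (φ : ℝ → ℝ) (hφ : ∀ s, φ s = (Real.sinh α)⁻¹ * ∫ u in (0:ℝ)..s, κ u)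
    (ψ : ℝ → Fin 3 → ℝ)
    (hψ : ∀ s, ψ s = Real.sinh α •
      ∫ u in (0:ℝ)..s,
        ![Real.cosh α / Real.sinh α, Real.cos (φ u), Real.sin (φ u)])
    (T N B : ℝ → Fin 3 → ℝ) (τ : ℝ → ℝ)
    (hT : ∀ s, T s = ![Real.cosh α, Real.sinh α * Real.cos (φ s),
      Real.sinh α * Real.sin (φ s)])
    (hN : ∀ s, N s = ![0, -Real.sin (φ s), Real.cos (φ s)])
    (hB : ∀ s, B s = -![Real.sinh α, Real.cosh α * Real.cos (φ s),
      Real.cosh α * Real.sin (φ s)])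
    (hτ : ∀ s, τ s = (Real.cosh α / Real.sinh α) * κ s) :
    (∀ s, deriv ψ s = T s) ∧
    (∀ s, deriv T s = κ s • N s) ∧
    (∀ s, deriv N s = κ s • T s + τ s • B s) ∧
    (∀ s, deriv B s = -(τ s) • N s) ∧
    (∀ s, g (T s) (T s) = -1) ∧
    (∀ s, g (N s) (N s) = 1) ∧
    (∀ s, g (B s) (B s) = 1) ∧
    (∀ s, g (T s) (N s) = 0) ∧
    (∀ s, g (T s) (B s) = 0) ∧
    (∀ s, g (N s) (B s) = 0) := by
  have hS : Real.sinh α ≠ 0 := (Real.sinh_pos_iff.2 hα).ne'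
  have hφd := hasDerivAt_angle hκc hφ
  have hφc : Continuous φ := continuous_iff_continuousAt.2 fun s => (hφd s).continuousAt
  have hcs := Real.cosh_sq α
  refine ⟨fun s => ?_, fun s => ?_, fun s => ?_, fun s => ?_, fun s => ?_, fun s => ?_,
    fun s => ?_, fun s => ?_, fun s => ?_, fun s => ?_⟩
  · have hc : Continuous fun u =>
        ![Real.cosh α / Real.sinh α, Real.cos (φ u), Real.sin (φ u)] := by
      fun_prop
    rw [funext hψ, ((hc.integral_hasStrictDerivAt 0 s).hasDerivAt.fun_const_smul _).deriv, hT]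
    ext i
    fin_cases i <;> simp [mul_div_cancel₀, hS]
  · rw [funext hT, (hasDerivAt_vec3 (hasDerivAt_const s _) ((hφd s).cos.const_mul _)
      ((hφd s).sin.const_mul _)).deriv, hN]
    ext i
    fin_cases i <;> simp <;> field_simp
  · rw [funext hN, (hasDerivAt_vec3 (hasDerivAt_const s _) (hφd s).sin.fun_neg (hφd s).cos).deriv,
      hT, hB, hτ]
    ext i
    fin_cases i <;> simp <;> field_simp <;> (try rw [hcs]) <;> ring
  · rw [funext hB, (hasDerivAt_vec3 (hasDerivAt_const s _) ((hφd s).cos.const_mul _)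
      ((hφd s).sin.const_mul _)).fun_neg.deriv, hN, hτ]
    ext i
    fin_cases i <;> simp <;> field_simp
  all_goals
    have hsc := Real.sin_sq_add_cos_sq (φ s)
    simp only [hT, hN, hB, g, Pi.neg_apply, Matrix.cons_val]
  · linear_combination Real.sinh α ^ 2 * hsc - hcs
  · linear_combination hsc
  · linear_combination Real.cosh α ^ 2 * hsc + hcs
  · ring
  · linear_combination -Real.cosh α * Real.sinh α * hsc
  · ring
end

section
/- (Example 2) Let α > 0 and define, for s > 0, ψ(s) = (sinh α / 2) · s · (2·coth α, sin(ln s) + cos(ln s), sin(ln s) − cos(ln s)). Then with T = ψ', N(s) = (0, −sin(ln s), cos(ln s)), B(s) = −(sinh α, cosh α·cos(ln s), cosh α·sin(ln s)), the Frenet equations T' = κ·N, N' = κ·T + τ·B, B' = −τ·N hold on (0,∞) with curvature κ(s) = sinh α / s and torsion τ(s) = cosh α / s, and g(T,T) = −1, g(N,N) = g(B,B) = 1, g(T,N) = g(T,B) = g(N,B) = 0 for every s > 0; thus ψ is a time-like general helix with these intrinsic equations. -/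
theorem hasDerivAt_vec3_s6 {f₀ f₁ f₂ : ℝ → ℝ} {a b c s : ℝ} (h₀ : HasDerivAt f₀ a s)
    (h₁ : HasDerivAt f₁ b s) (h₂ : HasDerivAt f₂ c s) :
    HasDerivAt (fun t => ![f₀ t, f₁ t, f₂ t]) ![a, b, c] s := by
  rw [hasDerivAt_pi]
  intro i
  fin_cases i
  · exact h₀
  · exact h₁
  · exact h₂

theorem hasDerivAt_sin_log {s : ℝ} (hs : 0 < s) :
    HasDerivAt (fun t => Real.sin (Real.log t)) (Real.cos (Real.log s) / s) s := by
  simpa [div_eq_mul_inv] using (Real.hasDerivAt_log hs.ne').sin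

theorem hasDerivAt_cos_log {s : ℝ} (hs : 0 < s) :
    HasDerivAt (fun t => Real.cos (Real.log t)) (-Real.sin (Real.log s) / s) s := by
  simpa [div_eq_mul_inv] using (Real.hasDerivAt_log hs.ne').cos

/-- Example 2: for `s > 0`,
`ψ(s) = (sinh α / 2) · s · (2 coth α, sin(ln s) + cos(ln s), sin(ln s) − cos(ln s))`
is a time-like general helix with curvature `κ(s) = sinh α / s` and torsion
`τ(s) = cosh α / s`. -/
theorem general_helix_example_two (α : ℝ) (hα : 0 < α)
    (ψ T N B : ℝ → Fin 3 → ℝ)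
    (hψ : ∀ s, 0 < s → ψ s = ((Real.sinh α / 2) * s) •
      ![2 * (Real.cosh α / Real.sinh α),
        Real.sin (Real.log s) + Real.cos (Real.log s),
        Real.sin (Real.log s) - Real.cos (Real.log s)])
    (hT : ∀ s, 0 < s → T s = deriv ψ s)
    (hN : ∀ s, N s = ![0, -Real.sin (Real.log s), Real.cos (Real.log s)])
    (hB : ∀ s, B s = -![Real.sinh α, Real.cosh α * Real.cos (Real.log s),
      Real.cosh α * Real.sin (Real.log s)]) :
    (∀ s, 0 < s → deriv T s = (Real.sinh α / s) • N s) ∧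
    (∀ s, 0 < s → deriv N s = (Real.sinh α / s) • T s + (Real.cosh α / s) • B s) ∧
    (∀ s, 0 < s → deriv B s = -(Real.cosh α / s) • N s) ∧
    (∀ s, 0 < s → g (T s) (T s) = -1) ∧
    (∀ s, 0 < s → g (N s) (N s) = 1) ∧
    (∀ s, 0 < s → g (B s) (B s) = 1) ∧
    (∀ s, 0 < s → g (T s) (N s) = 0) ∧
    (∀ s, 0 < s → g (T s) (B s) = 0) ∧
    (∀ s, 0 < s → g (N s) (B s) = 0) := by
  have hsh : Real.sinh α ≠ 0 := (Real.sinh_pos_iff.mpr hα).ne'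
  have hT' : ∀ s, 0 < s → T s = ![Real.cosh α, Real.sinh α * Real.cos (Real.log s),
      Real.sinh α * Real.sin (Real.log s)] := by
    intro s hs
    have hS := hasDerivAt_sin_log hs
    have hC := hasDerivAt_cos_log hs
    have hlin : HasDerivAt (fun t => Real.sinh α / 2 * t) (Real.sinh α / 2) s := by
      simpa using (hasDerivAt_id s).const_mul (Real.sinh α / 2)
    -- `ψ` is prescribed only on `(0, ∞)`, which is a neighbourhood of `s`.
    have hev : ψ =ᶠ[nhds s] _ := (eventually_gt_nhds hs).mono hψ
    rw [hT s hs, hev.deriv_eq]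
    refine (hlin.smul (hasDerivAt_vec3_s6 (hasDerivAt_const s _) (hS.add hC)
      (hS.sub hC))).deriv.trans ?_
    have := hs.ne'
    ext i
    fin_cases i <;> simp <;> field_simp <;> ring
  have hcs := Real.cosh_sq α
  refine ⟨fun s hs => ?_, fun s hs => ?_, fun s hs => ?_, fun s hs => ?_, fun s hs => ?_,
    fun s hs => ?_, fun s hs => ?_, fun s hs => ?_, fun s hs => ?_⟩
  · have hev : T =ᶠ[nhds s] _ := (eventually_gt_nhds hs).mono hT'
    rw [hev.deriv_eq, (hasDerivAt_vec3_s6 (hasDerivAt_const s _)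
      ((hasDerivAt_cos_log hs).const_mul _) ((hasDerivAt_sin_log hs).const_mul _)).deriv, hN]
    ext i
    fin_cases i <;> simp <;> ring
  · rw [funext hN, hT' s hs, hB]
    refine (hasDerivAt_vec3_s6 (hasDerivAt_const s _) (hasDerivAt_sin_log hs).neg
      (hasDerivAt_cos_log hs)).deriv.trans ?_
    ext i
    fin_cases i <;> simp <;> field_simp
    · ring
    · linear_combination Real.cos (Real.log s) * hcs
    · linear_combination Real.sin (Real.log s) * hcs
  · rw [funext hB, hN]
    refine (hasDerivAt_vec3_s6 (hasDerivAt_const s _) ((hasDerivAt_cos_log hs).const_mul _)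
      ((hasDerivAt_sin_log hs).const_mul _)).neg.deriv.trans ?_
    ext i
    fin_cases i <;> simp <;> ring
  all_goals
    have hsc := Real.sin_sq_add_cos_sq (Real.log s)
    simp only [g, hT' s hs, hN, hB, Pi.neg_apply, Matrix.cons_val]
  · linear_combination Real.sinh α ^ 2 * hsc - hcs
  · linear_combination hsc
  · linear_combination Real.cosh α ^ 2 * hsc + hcs
  · ring
  · linear_combination -Real.sinh α * Real.cosh α * hsc
  · ring
end

section
/- (Axis lemma) Let T, N, B : ℝ → ℝ³ be differentiable maps and κ, τ : ℝ → ℝ functions with κ(s) > 0 for all s, satisfying the Frenet equations T' = κ·N, N' = κ·T + τ·B, B' = −τ·N and the metric conditions g(T,T) = −1, g(N,N) = g(B,B) = 1, g(T,N) = g(T,B) = g(N,B) = 0 at every s. If U ∈ ℝ³ is a constant vector such that the function s ↦ g(T(s), U) is constant, then there exist constants λ, μ ∈ ℝ such that U = λ·T(s) + μ·B(s) for all s, and λ·κ(s) = μ·τ(s) for all s. -/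
/-- Expansion of a vector in a pseudo-orthonormal frame with `t` time-like. With `M` the matrix
whose rows are `t, n, b` and `J = diag(-1, 1, 1)`, the metric relations say `(M J) (Mᵀ J) = 1`;
a one-sided inverse of a square matrix is two-sided, and `(Mᵀ J) (M J) = 1` is the expansion. -/
lemma frame_expansion (t n b u : Fin 3 → ℝ) (htt : g t t = -1) (hnn : g n n = 1)
    (hbb : g b b = 1) (htn : g t n = 0) (htb : g t b = 0) (hnb : g n b = 0) :
    u = -(g t u) • t + g n u • n + g b u • b := by
  unfold g at *
  have h : (!![-t 0, t 1, t 2; -n 0, n 1, n 2; -b 0, b 1, b 2] : Matrix (Fin 3) (Fin 3) ℝ) *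
      !![-t 0, n 0, b 0; -t 1, n 1, b 1; -t 2, n 2, b 2] = 1 := by
    ext i j
    fin_cases i <;> fin_cases j <;> simp [Matrix.mul_apply, Fin.sum_univ_three] <;> linarith
  have h' := mul_eq_one_comm.mp h
  have e := fun i j => congrFun (congrFun h' i) j
  simp only [Matrix.mul_apply, Matrix.one_apply, Fin.sum_univ_three] at e
  ext i
  have e0 := e i 0
  have e1 := e i 1
  have e2 := e i 2
  fin_cases i <;> simp at e0 e1 e2 ⊢ <;>
    linear_combination (-u 0) * e0 - u 1 * e1 - u 2 * e2

lemma hasDerivAt_g_left {X : ℝ → Fin 3 → ℝ} (hX : Differentiable ℝ X) (U : Fin 3 → ℝ) (s : ℝ) :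
    HasDerivAt (fun s => g (X s) U) (g (deriv X s) U) s := by
  have h := hasDerivAt_pi.mp (hX s).hasDerivAt
  exact ((((h 0).mul_const (U 0)).neg).add ((h 1).mul_const (U 1))).add ((h 2).mul_const (U 2))

/-- Axis lemma: if `g(T, U)` is constant for a fixed vector `U`, then `U` lies in
the plane spanned by `T` and `B` with constant coefficients, and `λκ = μτ`. -/
theorem helix_axis_lemma (T N B : ℝ → Fin 3 → ℝ) (κ τ : ℝ → ℝ)
    (hT : Differentiable ℝ T) (hN : Differentiable ℝ N) (hB : Differentiable ℝ B)
    (hκ0 : ∀ s, 0 < κ s)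
    (frenet1 : ∀ s, deriv T s = κ s • N s)
    (frenet2 : ∀ s, deriv N s = κ s • T s + τ s • B s)
    (frenet3 : ∀ s, deriv B s = -(τ s) • N s)
    (hTT : ∀ s, g (T s) (T s) = -1)
    (hNN : ∀ s, g (N s) (N s) = 1)
    (hBB : ∀ s, g (B s) (B s) = 1)
    (hTN : ∀ s, g (T s) (N s) = 0)
    (hTB : ∀ s, g (T s) (B s) = 0)
    (hNB : ∀ s, g (N s) (B s) = 0)
    (U : Fin 3 → ℝ) (hU : ∃ c : ℝ, ∀ s, g (T s) U = c) :
    ∃ lam mu : ℝ, (∀ s, U = lam • T s + mu • B s) ∧ (∀ s, lam * κ s = mu * τ s) := by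
  obtain ⟨c, hc⟩ := hU
  have hNU : ∀ s, g (N s) U = 0 := by
    intro s
    have h := hasDerivAt_g_left hT U s
    rw [funext hc, frenet1] at h
    have h0 := h.unique (hasDerivAt_const s c)
    have h1 : κ s * g (N s) U = 0 := by
      rw [← h0]
      simp only [g, Pi.smul_apply, smul_eq_mul]
      ring
    exact (mul_eq_zero.mp h1).resolve_left (hκ0 s).ne'
  have hBU : ∀ s, g (B s) U = g (B 0) U := by
    intro s
    refine is_const_of_deriv_eq_zero (f := fun s => g (B s) U)
      (fun s => (hasDerivAt_g_left hB U s).differentiableAt) (fun s => ?_) s 0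
    rw [(hasDerivAt_g_left hB U s).deriv, frenet3]
    have h := hNU s
    simp only [g, Pi.smul_apply, smul_eq_mul] at h ⊢
    linear_combination -(τ s) * h
  refine ⟨-c, g (B 0) U, fun s => ?_, fun s => ?_⟩
  · have h := frame_expansion (T s) (N s) (B s) U (hTT s) (hNN s) (hBB s) (hTN s) (hTB s) (hNB s)
    rw [hc, hNU, hBU, zero_smul, add_zero] at h
    exact h
  · have h := hasDerivAt_g_left hN U s
    rw [funext hNU, frenet2] at h
    have h0 := h.unique (hasDerivAt_const s (0 : ℝ))
    have h1 := hc s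
    have h2 := hBU s
    rw [← h2, ← h1]
    simp only [g, Pi.smul_apply, Pi.add_apply, smul_eq_mul] at h0 ⊢
    linear_combination -h0
end

section
/- (Corollary 3.5, corrected form) Let T, N, B : ℝ → ℝ³ be differentiable maps and κ, τ : ℝ → ℝ functions with κ(s) > 0 for all s, satisfying the Frenet equations T' = κ·N, N' = κ·T + τ·B, B' = −τ·N and the metric conditions g(T,T) = −1, g(N,N) = g(B,B) = 1, g(T,N) = g(T,B) = g(N,B) = 0 at every s. If there exists a non-zero constant time-like vector U (i.e. g(U,U) < 0) such that s ↦ g(T(s), U) is constant, then τ(s)² > κ(s)² for every s. In particular, there is no time-like general helix with time-like axis whose ratio satisfies |τ/κ| ≤ 1. -/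
/-- Parseval's identity for an orthonormal frame of Minkowski 3-space. If `M` has rows `T, N, B`
and `G` is the Gram matrix of `g`, orthonormality says `M G Mᵀ = G`; as `G² = 1`, the matrices
`M G` and `Mᵀ G` are mutually inverse, so `Mᵀ G M = G` as well. -/
theorem g_self_eq_frame (T N B U : Fin 3 → ℝ)
    (hTT : g T T = -1) (hNN : g N N = 1) (hBB : g B B = 1)
    (hTN : g T N = 0) (hTB : g T B = 0) (hNB : g N B = 0) :
    g U U = -g T U ^ 2 + g N U ^ 2 + g B U ^ 2 := by
  simp only [g] at *
  have h1 : !![-T 0, T 1, T 2; -N 0, N 1, N 2; -B 0, B 1, B 2] *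
      !![-T 0, N 0, B 0; -T 1, N 1, B 1; -T 2, N 2, B 2] = 1 := by
    ext i j
    fin_cases i <;> fin_cases j <;>
      simp [Matrix.mul_apply, Fin.sum_univ_three] <;> linarith
  have h2 := mul_eq_one_comm.mp h1
  have e := fun i j => congrFun (congrFun h2 i) j
  have e00 := e 0 0
  have e01 := e 0 1
  have e02 := e 0 2
  have e11 := e 1 1
  have e12 := e 1 2
  have e22 := e 2 2
  simp [Matrix.mul_apply, Fin.sum_univ_three] at e00 e01 e02 e11 e12 e22
  linear_combination U 0 ^ 2 * e00 + 2 * U 0 * U 1 * e01 + 2 * U 0 * U 2 * e02 -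
    U 1 ^ 2 * e11 - 2 * U 1 * U 2 * e12 - U 2 ^ 2 * e22

theorem hasDerivAt_g_const {X : ℝ → Fin 3 → ℝ} {X' : Fin 3 → ℝ} {s : ℝ}
    (h : HasDerivAt X X' s) (U : Fin 3 → ℝ) :
    HasDerivAt (fun t => g (X t) U) (g X' U) s := by
  have h' := hasDerivAt_pi.mp h
  exact (((h' 0).mul_const (U 0)).neg.add ((h' 1).mul_const (U 1))).add
    ((h' 2).mul_const (U 2))

/-- Corollary 3.5 (corrected form): a time-like general helix with a time-like
axis must satisfy `τ² > κ²` everywhere; in particular there is no such helix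
with `|τ/κ| ≤ 1`. -/
theorem no_timelike_general_helix_with_small_torsion
    (T N B : ℝ → Fin 3 → ℝ) (κ τ : ℝ → ℝ)
    (hT : Differentiable ℝ T) (hN : Differentiable ℝ N) (hB : Differentiable ℝ B)
    (hκ0 : ∀ s, 0 < κ s)
    (frenet1 : ∀ s, deriv T s = κ s • N s)
    (frenet2 : ∀ s, deriv N s = κ s • T s + τ s • B s)
    (frenet3 : ∀ s, deriv B s = -(τ s) • N s)
    (hTT : ∀ s, g (T s) (T s) = -1)
    (hNN : ∀ s, g (N s) (N s) = 1)
    (hBB : ∀ s, g (B s) (B s) = 1)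
    (hTN : ∀ s, g (T s) (N s) = 0)
    (hTB : ∀ s, g (T s) (B s) = 0)
    (hNB : ∀ s, g (N s) (B s) = 0)
    (U : Fin 3 → ℝ) (hU0 : U ≠ 0) (hUtimelike : g U U < 0)
    (hU : ∃ c : ℝ, ∀ s, g (T s) U = c) :
    ∀ s, κ s ^ 2 < τ s ^ 2 := by
  obtain ⟨a, ha⟩ := hU
  have hb : ∀ s, g (N s) U = 0 := by
    intro s
    have h := hasDerivAt_g_const (hT s).hasDerivAt U
    rw [frenet1, funext ha] at h
    have h0 := h.unique (hasDerivAt_const s a)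
    have h1 : κ s * g (N s) U = 0 := by
      rw [← h0]
      simp only [g, Pi.smul_apply, smul_eq_mul]
      ring
    exact (mul_eq_zero.mp h1).resolve_left (hκ0 s).ne'
  intro s
  have hac : κ s * a + τ s * g (B s) U = 0 := by
    have h := hasDerivAt_g_const (hN s).hasDerivAt U
    rw [frenet2, funext hb] at h
    have h0 := h.unique (hasDerivAt_const s (0 : ℝ))
    rw [← h0, ← ha s]
    simp only [g, Pi.add_apply, Pi.smul_apply, smul_eq_mul]
    ring
  have hU2 := g_self_eq_frame (T s) (N s) (B s) U (hTT s) (hNN s) (hBB s) (hTN s) (hTB s) (hNB s)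
  rw [ha, hb] at hU2
  set c := g (B s) U
  have hlt : c ^ 2 < a ^ 2 := by linarith
  have hsq : τ s ^ 2 * c ^ 2 = κ s ^ 2 * a ^ 2 := by
    linear_combination (τ s * c - κ s * a) * hac
  have hmul : κ s ^ 2 * c ^ 2 < τ s ^ 2 * c ^ 2 := by
    rw [hsq]
    exact mul_lt_mul_of_pos_left hlt (pow_pos (hκ0 s) 2)
  exact lt_of_mul_lt_mul_right hmul (sq_nonneg c)
end

section
/- If T, N, B : ℝ → ℝ³ are differentiable maps and κ, τ : ℝ → ℝ are functions with κ(s) > 0 for all s, satisfying the Frenet equations T' = κ·N, N' = κ·T + τ·B, B' = −τ·N and the metric conditions g(T,T) = −1, g(N,N) = g(B,B) = 1, g(T,N) = g(T,B) = g(N,B) = 0 at every s, and if α > 0 and the first component of T is constantly cosh α (equivalently g(T(s), e₀) = −cosh α for all s, where e₀ = (1,0,0)), then τ(s)² = coth²(α)·κ(s)² for every s. -/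
/-- The identity `g(e₀, e₀) = -T₀² + N₀² + B₀²` for an orthonormal frame, in the case `N₀ = 0`.
Here the spatial parts of `T` and `B` are both orthogonal to the spatial part of `N`, hence
parallel, and the identity is the equality case of Cauchy–Schwarz for them. -/
lemma frame_zero_component {T N B : Fin 3 → ℝ}
    (hTT : g T T = -1) (hNN : g N N = 1) (hBB : g B B = 1)
    (hTN : g T N = 0) (hTB : g T B = 0) (hNB : g N B = 0) (hN0 : N 0 = 0) :
    B 0 ^ 2 = T 0 ^ 2 - 1 := by
  simp only [g, hN0] at *
  have h1 : (T 1 * B 2 - T 2 * B 1) * N 1 = 0 := by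
    linear_combination B 2 * hTN - T 2 * hNB
  have h2 : (T 1 * B 2 - T 2 * B 1) * N 2 = 0 := by
    linear_combination T 1 * hNB - B 1 * hTN
  have hd : T 1 * B 2 - T 2 * B 1 = 0 := by
    linear_combination N 1 * h1 + N 2 * h2 - (T 1 * B 2 - T 2 * B 1) * hNN
  -- Lagrange's identity `|t|²|b|² = (t·b)² + det(t, b)²` for the spatial parts `t`, `b`
  have hL : (T 0 ^ 2 - 1) * (1 + B 0 ^ 2) = (T 0 * B 0) ^ 2 := by
    have ht : T 1 ^ 2 + T 2 ^ 2 = T 0 ^ 2 - 1 := by linear_combination hTT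
    have hb : B 1 ^ 2 + B 2 ^ 2 = 1 + B 0 ^ 2 := by linear_combination hBB
    have htb : T 1 * B 1 + T 2 * B 2 = T 0 * B 0 := by linear_combination hTB
    rw [← ht, ← hb, ← htb]
    linear_combination (T 1 * B 2 - T 2 * B 1) * hd
  linear_combination -hL

/-- If the first component of the time-like tangent `T` is constantly `cosh α`
(constant hyperbolic angle with the time-like axis `e₀ = (1,0,0)`), then
`τ² = coth²α · κ²` everywhere. -/
theorem constant_hyperbolic_angle_ratio (T N B : ℝ → Fin 3 → ℝ) (κ τ : ℝ → ℝ)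
    (hT : Differentiable ℝ T) (hN : Differentiable ℝ N) (hB : Differentiable ℝ B)
    (hκ0 : ∀ s, 0 < κ s)
    (frenet1 : ∀ s, deriv T s = κ s • N s)
    (frenet2 : ∀ s, deriv N s = κ s • T s + τ s • B s)
    (frenet3 : ∀ s, deriv B s = -(τ s) • N s)
    (hTT : ∀ s, g (T s) (T s) = -1)
    (hNN : ∀ s, g (N s) (N s) = 1)
    (hBB : ∀ s, g (B s) (B s) = 1)
    (hTN : ∀ s, g (T s) (N s) = 0)
    (hTB : ∀ s, g (T s) (B s) = 0)
    (hNB : ∀ s, g (N s) (B s) = 0)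
    (α : ℝ) (hα : 0 < α) (hangle : ∀ s, T s 0 = Real.cosh α) :
    ∀ s, τ s ^ 2 = (Real.cosh α / Real.sinh α) ^ 2 * κ s ^ 2 := by
  intro s
  have hcomp : ∀ (F : ℝ → Fin 3 → ℝ), Differentiable ℝ F → ∀ x,
      HasDerivAt (fun y => F y 0) (deriv F x 0) x := fun F hF x =>
    hasDerivAt_pi.1 (hF x).hasDerivAt 0
  have hN0 : ∀ x, N x 0 = 0 := by
    intro x
    have h := hcomp T hT x
    have hc : (fun y => T y 0) = fun _ => Real.cosh α := funext hangle
    rw [hc] at h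
    have h0 := h.unique (hasDerivAt_const x (Real.cosh α))
    rw [frenet1] at h0
    simpa [(hκ0 x).ne'] using h0
  have hrel : κ s * Real.cosh α + τ s * B s 0 = 0 := by
    have h := hcomp N hN s
    have hc : (fun y => N y 0) = fun _ => (0 : ℝ) := funext hN0
    rw [hc] at h
    have h0 := h.unique (hasDerivAt_const s (0 : ℝ))
    rw [frenet2] at h0
    simpa [hangle] using h0
  have hB0 := frame_zero_component (hTT s) (hNN s) (hBB s) (hTN s) (hTB s) (hNB s) (hN0 s)
  rw [hangle, Real.cosh_sq] at hB0
  have hs : Real.sinh α ≠ 0 := (Real.sinh_pos_iff.2 hα).ne'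
  field_simp
  linear_combination (-τ s ^ 2) * hB0 + (τ s * B s 0 - κ s * Real.cosh α) * hrel
end

section
/- (Case 3.2.1: classification of trigonometric solutions) Let α ≠ 0 and a₂, b₂, c₂, a₃, b₃, c₃ ∈ ℝ with (a₂, b₂, a₃, b₃) ≠ (0,0,0,0). If (a₂·cos t + b₂·sin t + c₂)² + (a₃·cos t + b₃·sin t + c₃)² = sinh²α for all t ∈ ℝ, then c₂ = c₃ = 0, a₂² + a₃² = b₂² + b₃² = sinh²α, and either (b₃ = a₂ and a₃ = −b₂) or (b₃ = −a₂ and a₃ = b₂). -/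
/-! Write `a = (a₂, a₃)`, `b = (b₂, b₃)`, `c = (c₂, c₃)`. Sampling the identity at
`0, π, π/2, -π/2, π/4` gives `a·c = b·c = a·b = 0` and `|a|² + |c|² = |b|² + |c|² = sinh² α`.
So `a` and `b` are orthogonal of equal nonzero length; they span the plane, which forces `c = 0`,
and `b` is `a` rotated by `±π/2`, the sign being that of the determinant `a₂ b₃ - a₃ b₂`. -/

/-- Case 3.2.1 (classification of trigonometric solutions): if
`(a₂ cos t + b₂ sin t + c₂)² + (a₃ cos t + b₃ sin t + c₃)² = sinh²α` for all `t`
with not all of `a₂, b₂, a₃, b₃` zero, then `c₂ = c₃ = 0`,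
`a₂² + a₃² = b₂² + b₃² = sinh²α` and `(b₃, a₃) = ±(a₂, −b₂)`. -/
theorem trigonometric_solutions_classification (α a₂ b₂ c₂ a₃ b₃ c₃ : ℝ)
    (hα : α ≠ 0)
    (hne : ¬(a₂ = 0 ∧ b₂ = 0 ∧ a₃ = 0 ∧ b₃ = 0))
    (h : ∀ t : ℝ,
      (a₂ * Real.cos t + b₂ * Real.sin t + c₂) ^ 2
        + (a₃ * Real.cos t + b₃ * Real.sin t + c₃) ^ 2 = Real.sinh α ^ 2) :
    c₂ = 0 ∧ c₃ = 0 ∧ a₂ ^ 2 + a₃ ^ 2 = Real.sinh α ^ 2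
      ∧ b₂ ^ 2 + b₃ ^ 2 = Real.sinh α ^ 2
      ∧ ((b₃ = a₂ ∧ a₃ = -b₂) ∨ (b₃ = -a₂ ∧ a₃ = b₂)) := by
  have h0 := h 0
  have h1 := h Real.pi
  have h2 := h (Real.pi / 2)
  have h3 := h (-(Real.pi / 2))
  have h4 := h (Real.pi / 4)
  simp only [Real.cos_zero, Real.sin_zero, Real.cos_pi, Real.sin_pi, Real.cos_pi_div_two,
    Real.sin_pi_div_two, Real.cos_neg, Real.sin_neg, Real.cos_pi_div_four,
    Real.sin_pi_div_four] at h0 h1 h2 h3 h4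
  have hr : (Real.sqrt 2 / 2) ^ 2 = 1 / 2 := by
    rw [div_pow, Real.sq_sqrt (by norm_num)]; norm_num
  generalize Real.sqrt 2 / 2 = r at h4 hr
  have hac : a₂ * c₂ + a₃ * c₃ = 0 := by linear_combination (h0 - h1) / 4
  have hbc : b₂ * c₂ + b₃ * c₃ = 0 := by linear_combination (h2 - h3) / 4
  have ha : a₂ ^ 2 + a₃ ^ 2 + (c₂ ^ 2 + c₃ ^ 2) = Real.sinh α ^ 2 := by
    linear_combination (h0 + h1) / 2
  have hb : b₂ ^ 2 + b₃ ^ 2 + (c₂ ^ 2 + c₃ ^ 2) = Real.sinh α ^ 2 := by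
    linear_combination (h2 + h3) / 2
  have hab : a₂ * b₂ + a₃ * b₃ = 0 := by
    linear_combination h4 - 2 * r * hac - 2 * r * hbc - ha / 2 - hb / 2
      - ((a₂ + b₂) ^ 2 + (a₃ + b₃) ^ 2) * hr
  have heq : b₂ ^ 2 + b₃ ^ 2 = a₂ ^ 2 + a₃ ^ 2 := by linear_combination hb - ha
  have hpos : a₂ ^ 2 + a₃ ^ 2 ≠ 0 := by
    intro hz
    refine hne ⟨?_, ?_, ?_, ?_⟩ <;> refine pow_eq_zero_iff two_ne_zero |>.mp ?_ <;>
      linarith [sq_nonneg a₂, sq_nonneg a₃, sq_nonneg b₂, sq_nonneg b₃]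
  -- Lagrange's identity `det(a, b)² = |a|² |b|² - (a·b)²`
  have hD2 : (a₂ * b₃ - a₃ * b₂) ^ 2 = (a₂ ^ 2 + a₃ ^ 2) ^ 2 := by
    linear_combination (a₂ ^ 2 + a₃ ^ 2) * heq - (a₂ * b₂ + a₃ * b₃) * hab
  have hD : a₂ * b₃ - a₃ * b₂ ≠ 0 := by
    intro hz
    rw [hz] at hD2
    exact pow_ne_zero 2 hpos (by linear_combination -hD2)
  -- Cramer's rule for the system `a·c = b·c = 0`
  have hc2 : c₂ = 0 := by
    apply (mul_eq_zero.mp (_ : (a₂ * b₃ - a₃ * b₂) * c₂ = 0)).resolve_left hD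
    linear_combination b₃ * hac - a₃ * hbc
  have hc3 : c₃ = 0 := by
    apply (mul_eq_zero.mp (_ : (a₂ * b₃ - a₃ * b₂) * c₃ = 0)).resolve_left hD
    linear_combination a₂ * hbc - b₂ * hac
  subst hc2 hc3
  refine ⟨rfl, rfl, by linear_combination ha, by linear_combination hb, ?_⟩
  rcases sq_eq_sq_iff_eq_or_eq_neg.mp hD2 with hd | hd
  · left
    have hs : (b₃ - a₂) ^ 2 + (a₃ + b₂) ^ 2 = 0 := by linear_combination heq - 2 * hd
    have e1 : b₃ - a₂ = 0 := pow_eq_zero_iff two_ne_zero |>.mp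
      (by linarith [sq_nonneg (b₃ - a₂), sq_nonneg (a₃ + b₂)])
    have e2 : a₃ + b₂ = 0 := pow_eq_zero_iff two_ne_zero |>.mp
      (by linarith [sq_nonneg (b₃ - a₂), sq_nonneg (a₃ + b₂)])
    exact ⟨by linarith, by linarith⟩
  · right
    have hs : (b₃ + a₂) ^ 2 + (a₃ - b₂) ^ 2 = 0 := by linear_combination heq + 2 * hd
    have e1 : b₃ + a₂ = 0 := pow_eq_zero_iff two_ne_zero |>.mp
      (by linarith [sq_nonneg (b₃ + a₂), sq_nonneg (a₃ - b₂)])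
    have e2 : a₃ - b₂ = 0 := pow_eq_zero_iff two_ne_zero |>.mp
      (by linarith [sq_nonneg (b₃ + a₂), sq_nonneg (a₃ - b₂)])
    exact ⟨by linarith, by linarith⟩
end

section
/- (Canonical form of the tangent of a time-like general helix) Let T, N, B : ℝ → ℝ³ be differentiable maps and κ, τ : ℝ → ℝ functions with κ(s) > 0 for all s, satisfying the Frenet equations T' = κ·N, N' = κ·T + τ·B, B' = −τ·N and the metric conditions g(T,T) = −1, g(N,N) = g(B,B) = 1, g(T,N) = g(T,B) = g(N,B) = 0 at every s. Suppose α > 0 and the first component of T is constantly cosh α. Then there exists a differentiable function φ : ℝ → ℝ such that T(s) = (cosh α, sinh α·cos φ(s), sinh α·sin φ(s)) and |φ'(s)| = κ(s)/sinh α for every s. -/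
/-- A differentiable curve on the unit circle has a differentiable angle function. The continuous
angle comes from the covering `Circle.exp`; near a point it differs from its value there by
the arcsine of a differentiable function, hence is differentiable. -/
theorem exists_differentiable_angle (c d : ℝ → ℝ) (hc : Differentiable ℝ c)
    (hd : Differentiable ℝ d) (h : ∀ s, c s ^ 2 + d s ^ 2 = 1) :
    ∃ φ : ℝ → ℝ, Differentiable ℝ φ ∧ (∀ s, c s = Real.cos (φ s)) ∧
      ∀ s, d s = Real.sin (φ s) := by
  have hmem : ∀ s, (⟨c s, d s⟩ : ℂ) ∈ Submonoid.unitSphere ℂ := by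
    intro s
    change (⟨c s, d s⟩ : ℂ) ∈ Metric.sphere (0 : ℂ) 1
    rw [mem_sphere_zero_iff_norm, ← pow_eq_one_iff_of_nonneg (norm_nonneg _) two_ne_zero,
      Complex.sq_norm, Complex.normSq_mk]
    linarith [h s]
  have hcont : Continuous fun s => (⟨c s, d s⟩ : ℂ) := by
    have := hc.continuous
    have := hd.continuous
    simp only [Complex.mk_eq_add_mul_I]
    fun_prop
  let f : C(ℝ, Circle) := ⟨fun s => ⟨⟨c s, d s⟩, hmem s⟩, hcont.subtype_mk _⟩
  obtain ⟨t, ht⟩ : ∃ t, Circle.exp t = f 0 := ⟨_, Circle.exp_arg (f 0)⟩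
  obtain ⟨F, ⟨-, hF⟩, -⟩ := Circle.isCoveringMap_exp.existsUnique_continuousMap_lifts f 0 t ht
  have key : ∀ s, Complex.exp (F s * Complex.I) = ⟨c s, d s⟩ := by
    intro s
    have := congrArg (Subtype.val) (congrFun hF s)
    simp only [Function.comp_apply, Circle.coe_exp] at this
    exact this
  have h1 : ∀ s, c s = Real.cos (F s) := by
    intro s
    have := congrArg Complex.re (key s)
    rw [Complex.exp_ofReal_mul_I_re] at this
    exact this.symm
  have h2 : ∀ s, d s = Real.sin (F s) := by
    intro s
    have := congrArg Complex.im (key s)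
    rw [Complex.exp_ofReal_mul_I_im] at this
    exact this.symm
  refine ⟨F, fun s₀ => ?_, h1, h2⟩
  -- `d s * c s₀ - c s * d s₀` is the sine of `F s - F s₀`.
  have hev : F =ᶠ[nhds s₀] fun s => F s₀ + Real.arcsin (d s * c s₀ - c s * d s₀) := by
    filter_upwards [Metric.continuousAt_iff'.1 F.continuous.continuousAt (Real.pi / 2)
      (by positivity)] with s hs
    rw [Real.dist_eq, abs_lt] at hs
    rw [h1, h1, h2, h2, ← Real.sin_sub, Real.arcsin_sin hs.1.le hs.2.le]
    ring
  refine DifferentiableAt.congr_of_eventuallyEq ?_ hev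
  have h0 : d s₀ * c s₀ - c s₀ * d s₀ = 0 := by ring
  refine (DifferentiableAt.comp s₀ (g := Real.arcsin) ?_ ?_).const_add _
  · rw [h0]
    exact Real.differentiableAt_arcsin.2 ⟨by norm_num, by norm_num⟩
  · exact ((hd s₀).mul_const _).sub ((hc s₀).mul_const _)

/-- Canonical form of the tangent of a time-like general helix: if the first
component of `T` is constantly `cosh α`, then
`T(s) = (cosh α, sinh α cos φ(s), sinh α sin φ(s))` for some differentiable `φ`
with `|φ'| = κ / sinh α`. -/
theorem tangent_canonical_form (T N B : ℝ → Fin 3 → ℝ) (κ τ : ℝ → ℝ)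
    (hT : Differentiable ℝ T) (hN : Differentiable ℝ N) (hB : Differentiable ℝ B)
    (hκ0 : ∀ s, 0 < κ s)
    (frenet1 : ∀ s, deriv T s = κ s • N s)
    (frenet2 : ∀ s, deriv N s = κ s • T s + τ s • B s)
    (frenet3 : ∀ s, deriv B s = -(τ s) • N s)
    (hTT : ∀ s, g (T s) (T s) = -1)
    (hNN : ∀ s, g (N s) (N s) = 1)
    (hBB : ∀ s, g (B s) (B s) = 1)
    (hTN : ∀ s, g (T s) (N s) = 0)
    (hTB : ∀ s, g (T s) (B s) = 0)
    (hNB : ∀ s, g (N s) (B s) = 0)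
    (α : ℝ) (hα : 0 < α) (hangle : ∀ s, T s 0 = Real.cosh α) :
    ∃ φ : ℝ → ℝ, Differentiable ℝ φ ∧
      (∀ s, T s = ![Real.cosh α, Real.sinh α * Real.cos (φ s),
        Real.sinh α * Real.sin (φ s)]) ∧
      (∀ s, |deriv φ s| = κ s / Real.sinh α) := by
  have hS : 0 < Real.sinh α := Real.sinh_pos_iff.2 hα
  have hcoord : ∀ s i, HasDerivAt (fun x => T x i) (κ s * N s i) s := by
    intro s i
    have := hasDerivAt_pi.1 (hT s).hasDerivAt i
    rwa [frenet1] at this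
  have hN0 : ∀ s, N s 0 = 0 := by
    intro s
    have h0 := hcoord s 0
    simp only [hangle] at h0
    have := h0.unique (hasDerivAt_const s _)
    exact (mul_eq_zero.1 this).resolve_left (hκ0 s).ne'
  have hN12 : ∀ s, N s 1 ^ 2 + N s 2 ^ 2 = 1 := by
    intro s
    have := hNN s
    simp only [g, hN0] at this
    linarith
  obtain ⟨φ, hφ, h1, h2⟩ := exists_differentiable_angle (fun s => T s 1 / Real.sinh α)
    (fun s => T s 2 / Real.sinh α)
    (fun s => ((hcoord s 1).div_const _).differentiableAt)
    (fun s => ((hcoord s 2).div_const _).differentiableAt) (by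
      intro s
      have := hTT s
      simp only [g, hangle] at this
      field_simp
      nlinarith [Real.cosh_sq α])
  have h1' : ∀ s, T s 1 = Real.sinh α * Real.cos (φ s) := fun s => by
    rw [← h1]; field_simp
  have h2' : ∀ s, T s 2 = Real.sinh α * Real.sin (φ s) := fun s => by
    rw [← h2]; field_simp
  refine ⟨φ, hφ, fun s => ?_, fun s => ?_⟩
  · ext i
    fin_cases i
    · exact hangle s
    · exact h1' s
    · exact h2' s
  · have e1 := hcoord s 1
    have e2 := hcoord s 2
    simp only [h1'] at e1
    simp only [h2'] at e2
    have u1 := e1.unique ((hφ s).hasDerivAt.cos.const_mul _)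
    have u2 := e2.unique ((hφ s).hasDerivAt.sin.const_mul _)
    -- Comparing squared speeds of the spatial part of `T`.
    have hsq : (deriv φ s * Real.sinh α) ^ 2 = κ s ^ 2 := by
      calc (deriv φ s * Real.sinh α) ^ 2
          = (deriv φ s * Real.sinh α) ^ 2 * (Real.sin (φ s) ^ 2 + Real.cos (φ s) ^ 2) := by
            rw [Real.sin_sq_add_cos_sq, mul_one]
        _ = (κ s * N s 1) ^ 2 + (κ s * N s 2) ^ 2 := by rw [u1, u2]; ring
        _ = κ s ^ 2 * (N s 1 ^ 2 + N s 2 ^ 2) := by ring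
        _ = κ s ^ 2 := by rw [hN12, mul_one]
    have := (sq_eq_sq_iff_abs_eq_abs _ _).1 hsq
    rw [abs_mul, abs_of_pos hS, abs_of_pos (hκ0 s)] at this
    rw [eq_div_iff hS.ne', this]
end

section
/- (Theorem 3.2, existence part) Let κ, τ : ℝ → ℝ be continuous functions. Then there exist continuously differentiable maps T, N, B : ℝ → ℝ³ and a twice continuously differentiable curve ψ : ℝ → ℝ³ such that ψ' = T, the Frenet equations T' = κ·N, N' = κ·T + τ·B, B' = −τ·N hold, and the metric conditions g(T,T) = −1, g(N,N) = g(B,B) = 1, g(T,N) = g(T,B) = g(N,B) = 0 hold at every s; that is, there exists a unit-speed time-like curve in Minkowski 3-space with prescribed curvature κ(s) and torsion τ(s). -/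
open Set MeasureTheory

section LinearODE

variable {E : Type*} [NormedAddCommGroup E] [NormedSpace ℝ E]

/-- The terms of the Picard series of `x' = A x`, `x 0 = x₀`: each one integrates `A` applied to
the previous one, so their sum is the solution. -/
noncomputable def picardTerm (A : ℝ → E →L[ℝ] E) (x₀ : E) : ℕ → ℝ → E
  | 0 => fun _ => x₀
  | n + 1 => fun t => ∫ s in (0 : ℝ)..t, A s (picardTerm A x₀ n s)

variable {A : ℝ → E →L[ℝ] E}

theorem continuous_picardTerm (hA : Continuous A) (x₀ : E) (n : ℕ) :
    Continuous (picardTerm A x₀ n) := by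
  induction n with
  | zero => exact continuous_const
  | succ n ih =>
    exact intervalIntegral.continuous_primitive
      (fun a b => (hA.clm_apply ih).intervalIntegrable a b) 0

theorem hasDerivAt_picardTerm_succ [CompleteSpace E] (hA : Continuous A) (x₀ : E) (n : ℕ) (t : ℝ) :
    HasDerivAt (picardTerm A x₀ (n + 1)) (A t (picardTerm A x₀ n t)) t :=
  (hA.clm_apply (continuous_picardTerm hA x₀ n)).integral_hasStrictDerivAt 0 t |>.hasDerivAt

theorem norm_picardTerm_le (x₀ : E) {M R : ℝ}
    (hM : ∀ s, |s| ≤ R → ‖A s‖ ≤ M) (n : ℕ) :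
    ∀ t, |t| ≤ R → ‖picardTerm A x₀ n t‖ ≤ ‖x₀‖ * (M * |t|) ^ n / n.factorial := by
  induction n with
  | zero => intro t _; simp [picardTerm]
  | succ n ih =>
    intro t ht
    have hM0 : 0 ≤ M := (norm_nonneg _).trans (hM t ht)
    have hbound : ∀ s ∈ uIoc 0 t, ‖A s (picardTerm A x₀ n s)‖ ≤
        (‖x₀‖ * M ^ (n + 1) / n.factorial) * |s - 0| ^ n := by
      intro s hs
      have hst : |s| ≤ |t| := by
        simpa using abs_sub_left_of_mem_uIcc (uIoc_subset_uIcc hs)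
      have hsR := hst.trans ht
      calc ‖A s (picardTerm A x₀ n s)‖ ≤ ‖A s‖ * ‖picardTerm A x₀ n s‖ := (A s).le_opNorm _
        _ ≤ M * (‖x₀‖ * (M * |s|) ^ n / n.factorial) :=
          mul_le_mul (hM s hsR) (ih s hsR) (norm_nonneg _) hM0
        _ = _ := by rw [sub_zero, mul_pow]; ring
    have hint : IntegrableOn (fun s : ℝ => (‖x₀‖ * M ^ (n + 1) / n.factorial) * |s - 0| ^ n)
        (uIoc 0 t) := by
      have : Continuous (fun s : ℝ => (‖x₀‖ * M ^ (n + 1) / n.factorial) * |s - 0| ^ n) := by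
        fun_prop
      exact intervalIntegrable_iff.1 (this.intervalIntegrable 0 t)
    calc ‖picardTerm A x₀ (n + 1) t‖
        = ‖∫ s in uIoc 0 t, A s (picardTerm A x₀ n s)‖ :=
          intervalIntegral.norm_intervalIntegral_eq _ _ _ _
      _ ≤ ∫ s in uIoc 0 t, (‖x₀‖ * M ^ (n + 1) / n.factorial) * |s - 0| ^ n :=
          norm_integral_le_of_norm_le hint
            ((ae_restrict_iff' measurableSet_uIoc).2 (Filter.Eventually.of_forall hbound))
      _ = ‖x₀‖ * (M * |t|) ^ (n + 1) / (n + 1).factorial := by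
          rw [integral_const_mul, integral_pow_abs_sub_uIoc, sub_zero, Nat.factorial_succ]
          push_cast
          rw [mul_pow]
          field_simp

/-- A linear ODE with continuous coefficients has solutions on all of `ℝ`. -/
theorem exists_linear_ode [CompleteSpace E] (hA : Continuous A) (x₀ : E) :
    ∃ x : ℝ → E, x 0 = x₀ ∧ ∀ t, HasDerivAt x (A t (x t)) t := by
  set p := picardTerm A x₀ with hp
  -- The bounds on the terms and the coefficients are uniform only on bounded time intervals.
  have key : ∀ R : ℝ, 0 ≤ R → ∃ M, 0 ≤ M ∧ (∀ s, |s| ≤ R → ‖A s‖ ≤ M) ∧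
      ∀ n t, |t| ≤ R → ‖p n t‖ ≤ ‖x₀‖ * ((M * R) ^ n / n.factorial) := by
    intro R hR
    obtain ⟨M, hM⟩ := (isCompact_Icc (a := -R) (b := R)).exists_bound_of_continuousOn
      hA.continuousOn
    have hM' : ∀ s, |s| ≤ R → ‖A s‖ ≤ M := fun s hs => hM s (abs_le.1 hs)
    have hM0 : 0 ≤ M := (norm_nonneg _).trans (hM' 0 (by simpa using hR))
    refine ⟨M, hM0, hM', fun n t ht => (norm_picardTerm_le x₀ hM' n t ht).trans ?_⟩
    rw [mul_div_assoc]
    gcongr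
  have hsum : ∀ t, Summable fun n => p n t := by
    intro t
    obtain ⟨M, -, -, hM⟩ := key |t| (abs_nonneg t)
    exact Summable.of_norm_bounded ((Real.summable_pow_div_factorial _).mul_left _)
      fun n => hM n t le_rfl
  have hsplit : ∀ t, ∑' n, p n t = x₀ + ∑' n, p (n + 1) t := fun t =>
    (hsum t).tsum_eq_zero_add
  refine ⟨fun t => ∑' n, p n t, ?_, fun t => ?_⟩
  · exact (hsplit 0).trans (by simp [hp, picardTerm])
  · obtain ⟨M, hM0, hAM, hM⟩ := key (|t| + 1) (by positivity)
    have hball : ∀ s ∈ Metric.ball (0 : ℝ) (|t| + 1), |s| ≤ |t| + 1 := fun s hs => by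
      simpa using (mem_ball_zero_iff.1 hs).le
    have htb : t ∈ Metric.ball (0 : ℝ) (|t| + 1) := by simp
    have hd := hasDerivAt_tsum_of_isPreconnected
      (((Real.summable_pow_div_factorial (M * (|t| + 1))).mul_left ‖x₀‖).mul_left M)
      Metric.isOpen_ball (convex_ball (0 : ℝ) (|t| + 1)).isPreconnected
      (g := fun n => p (n + 1)) (g' := fun n s => A s (p n s))
      (fun n s _ => hasDerivAt_picardTerm_succ hA x₀ n s)
      (fun n s hs => ((A s).le_opNorm _).trans
        (mul_le_mul (hAM s (hball s hs)) (hM n s (hball s hs)) (norm_nonneg _) hM0))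
      htb ((summable_nat_add_iff 1).2 (hsum t)) htb
    rw [← (A t).map_tsum (hsum t)] at hd
    simp only [hsplit] at hd ⊢
    exact hd.const_add x₀

end LinearODE

/-- The Frenet system as a linear ODE, solved with the standard basis as initial frame. -/
theorem exists_frenet_frame {κ τ : ℝ → ℝ} (hκ : Continuous κ) (hτ : Continuous τ) :
    ∃ T N B : ℝ → Fin 3 → ℝ, T 0 = ![1, 0, 0] ∧ N 0 = ![0, 1, 0] ∧ B 0 = ![0, 0, 1] ∧
      (∀ s, HasDerivAt T (κ s • N s) s) ∧
      (∀ s, HasDerivAt N (κ s • T s + τ s • B s) s) ∧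
      (∀ s, HasDerivAt B (-(τ s) • N s) s) := by
  let V := Fin 3 → ℝ
  let pT : V × V × V →L[ℝ] V := .fst ℝ V (V × V)
  let pN : V × V × V →L[ℝ] V := (ContinuousLinearMap.fst ℝ V V).comp (.snd ℝ V (V × V))
  let pB : V × V × V →L[ℝ] V := (ContinuousLinearMap.snd ℝ V V).comp (.snd ℝ V (V × V))
  let A : ℝ → V × V × V →L[ℝ] V × V × V := fun s =>
    κ s • pN.prod (pT.prod 0) + τ s • (0 : V × V × V →L[ℝ] V).prod (pB.prod (-pN))
  have hA : Continuous A := (hκ.smul continuous_const).add (hτ.smul continuous_const)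
  obtain ⟨x, hx0, hx⟩ := exists_linear_ode hA (![1, 0, 0], ![0, 1, 0], ![0, 0, 1])
  refine ⟨fun s => pT (x s), fun s => pN (x s), fun s => pB (x s), by simp [hx0, pT],
    by simp [hx0, pN], by simp [hx0, pB], fun s => ?_, fun s => ?_, fun s => ?_⟩
  · have h := pT.hasFDerivAt.comp_hasDerivAt s (hx s)
    have e : pT (A s (x s)) = κ s • pN (x s) := by simp [A, pT, pN]
    rwa [e] at h
  · have h := pN.hasFDerivAt.comp_hasDerivAt s (hx s)
    have e : pN (A s (x s)) = κ s • pT (x s) + τ s • pB (x s) := by simp [A, pT, pN, pB]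
    rwa [e] at h
  · have h := pB.hasFDerivAt.comp_hasDerivAt s (hx s)
    have e : pB (A s (x s)) = -(τ s) • pN (x s) := by simp [A, pN, pB]
    rwa [e] at h

/-- The columns of a Frenet frame satisfy `Fᵀ η F = const`, where `F` has rows `T, N, B`. -/
theorem frenet_columns_const {κ τ : ℝ → ℝ} {T N B : ℝ → Fin 3 → ℝ}
    (hT : ∀ s, HasDerivAt T (κ s • N s) s)
    (hN : ∀ s, HasDerivAt N (κ s • T s + τ s • B s) s)
    (hB : ∀ s, HasDerivAt B (-(τ s) • N s) s) (i j : Fin 3) (s : ℝ) :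
    -(T s i * T s j) + N s i * N s j + B s i * B s j =
      -(T 0 i * T 0 j) + N 0 i * N 0 j + B 0 i * B 0 j := by
  have hT' := fun s i => hasDerivAt_pi.1 (hT s) i
  have hN' := fun s i => hasDerivAt_pi.1 (hN s) i
  have hB' := fun s i => hasDerivAt_pi.1 (hB s) i
  have hd : ∀ s, HasDerivAt
      (fun s => -(T s i * T s j) + N s i * N s j + B s i * B s j) 0 s := by
    intro s
    convert! ((((hT' s i).mul (hT' s j)).neg).add ((hN' s i).mul (hN' s j))).add
      ((hB' s i).mul (hB' s j)) using 1
    simp only [Pi.smul_apply, Pi.add_apply, smul_eq_mul]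
    ring
  exact is_const_of_deriv_eq_zero (fun s => (hd s).differentiableAt) (fun s => (hd s).deriv) s 0

/-- The passage from `Fᵀ η F = η` to `F η Fᵀ = η`: a left inverse of a square matrix is a right
inverse. -/
theorem rows_of_columns {t n b : Fin 3 → ℝ}
    (h : ∀ i j, -(t i * t j) + n i * n j + b i * b j =
      -(![1, 0, 0] i * ![1, 0, 0] j) + ![0, 1, 0] i * ![0, 1, 0] j
        + ![0, 0, 1] i * ![0, 0, 1] j) :
    g t t = -1 ∧ g n n = 1 ∧ g b b = 1 ∧ g t n = 0 ∧ g t b = 0 ∧ g n b = 0 := by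
  have hleft : !![t 0, -n 0, -b 0; -t 1, n 1, b 1; -t 2, n 2, b 2] *
      !![t 0, t 1, t 2; n 0, n 1, n 2; b 0, b 1, b 2] = (1 : Matrix (Fin 3) (Fin 3) ℝ) := by
    ext i j
    have hij := h i j
    fin_cases i <;> fin_cases j <;>
      simp [Matrix.mul_apply, Fin.sum_univ_three] at hij ⊢ <;> linarith
  have hright := mul_eq_one_comm.1 hleft
  have e := fun i j => congrFun (congrFun hright i) j
  have e00 := e 0 0
  have e11 := e 1 1
  have e22 := e 2 2
  have e01 := e 0 1
  have e02 := e 0 2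
  have e12 := e 1 2
  simp [Matrix.mul_apply, Fin.sum_univ_three] at e00 e11 e22 e01 e02 e12
  unfold g
  refine ⟨?_, ?_, ?_, ?_, ?_, ?_⟩ <;> linarith

theorem contDiff_one_of_hasDerivAt {V : Type*} [NormedAddCommGroup V] [NormedSpace ℝ V]
    {f f' : ℝ → V} (h : ∀ s, HasDerivAt f (f' s) s) (hf' : Continuous f') : ContDiff ℝ 1 f := by
  rw [contDiff_one_iff_deriv, funext fun s => (h s).deriv]
  exact ⟨fun s => (h s).differentiableAt, hf'⟩

/-- Theorem 3.2 (existence part): for arbitrary continuous `κ, τ` there exists a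
unit-speed time-like curve in Minkowski 3-space with curvature `κ` and torsion
`τ`. -/
theorem existence_timelike_curve (κ τ : ℝ → ℝ) (hκ : Continuous κ) (hτ : Continuous τ) :
    ∃ (ψ T N B : ℝ → Fin 3 → ℝ),
      ContDiff ℝ 2 ψ ∧ ContDiff ℝ 1 T ∧ ContDiff ℝ 1 N ∧ ContDiff ℝ 1 B ∧
      (∀ s, deriv ψ s = T s) ∧
      (∀ s, deriv T s = κ s • N s) ∧
      (∀ s, deriv N s = κ s • T s + τ s • B s) ∧
      (∀ s, deriv B s = -(τ s) • N s) ∧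
      (∀ s, g (T s) (T s) = -1) ∧
      (∀ s, g (N s) (N s) = 1) ∧
      (∀ s, g (B s) (B s) = 1) ∧
      (∀ s, g (T s) (N s) = 0) ∧
      (∀ s, g (T s) (B s) = 0) ∧
      (∀ s, g (N s) (B s) = 0) := by
  obtain ⟨T, N, B, hT0, hN0, hB0, hT, hN, hB⟩ := exists_frenet_frame hκ hτ
  have cT : Continuous T := continuous_iff_continuousAt.2 fun s => (hT s).continuousAt
  have cN : Continuous N := continuous_iff_continuousAt.2 fun s => (hN s).continuousAt
  have cB : Continuous B := continuous_iff_continuousAt.2 fun s => (hB s).continuousAt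
  have dT : ContDiff ℝ 1 T := contDiff_one_of_hasDerivAt hT (hκ.smul cN)
  have hψ : ∀ s, HasDerivAt (fun s => ∫ u in (0 : ℝ)..s, T u) (T s) s := fun s =>
    (cT.integral_hasStrictDerivAt 0 s).hasDerivAt
  have hg := fun s => rows_of_columns (t := T s) (n := N s) (b := B s) fun i j => by
    rw [frenet_columns_const hT hN hB i j s, hT0, hN0, hB0]
  refine ⟨fun s => ∫ u in (0 : ℝ)..s, T u, T, N, B, ?_, dT,
    contDiff_one_of_hasDerivAt hN ((hκ.smul cT).add (hτ.smul cB)),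
    contDiff_one_of_hasDerivAt hB (hτ.neg.smul cN),
    fun s => (hψ s).deriv, fun s => (hT s).deriv, fun s => (hN s).deriv, fun s => (hB s).deriv,
    fun s => (hg s).1, fun s => (hg s).2.1, fun s => (hg s).2.2.1, fun s => (hg s).2.2.2.1,
    fun s => (hg s).2.2.2.2.1, fun s => (hg s).2.2.2.2.2⟩
  rw [show (2 : WithTop ℕ∞) = 1 + 1 by norm_num, contDiff_succ_iff_deriv,
    funext fun s => (hψ s).deriv]
  exact ⟨fun s => (hψ s).differentiableAt, by simp, dT⟩
end

section
/- (Theorem 3.2, uniqueness part) Let κ, τ : ℝ → ℝ be continuous functions and let (ψ, T, N, B) and (ψ̄, T̄, N̄, B̄) be two unit-speed time-like Frenet apparatuses with the same κ and τ: i.e. ψ' = T, ψ̄' = T̄, both triples satisfy the Frenet equations T' = κ·N, N' = κ·T + τ·B, B' = −τ·N and the metric conditions g(T,T) = −1, g(N,N) = g(B,B) = 1, g(T,N) = g(T,B) = g(N,B) = 0 at every s. Then there exist a linear map L : ℝ³ → ℝ³ with g(L v, L w) = g(v, w) for all v, w ∈ ℝ³ and a constant vector c ∈ ℝ³ such that ψ̄(s)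 = L(ψ(s)) + c for all s; that is, a time-like curve is determined by its intrinsic equations uniquely up to position in Minkowski space. -/
/-- The linear map `v ↦ -g(t,v) t₂ + g(n,v) n₂ + g(b,v) b₂`. When `(t, n, b)` is `g`-orthonormal
with `t` time-like, this is the map sending `t, n, b` to `t₂, n₂, b₂`. -/
def frameMap (t n b t₂ n₂ b₂ : Fin 3 → ℝ) : (Fin 3 → ℝ) →ₗ[ℝ] (Fin 3 → ℝ) where
  toFun v := -(g t v • t₂) + g n v • n₂ + g b v • b₂
  map_add' v w := by
    ext i
    simp only [g, Pi.add_apply, Pi.neg_apply, Pi.smul_apply, smul_eq_mul]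
    ring
  map_smul' r v := by
    ext i
    simp only [g, Pi.add_apply, Pi.neg_apply, Pi.smul_apply, smul_eq_mul, RingHom.id_apply]
    ring

lemma frameMap_apply (t n b t₂ n₂ b₂ v : Fin 3 → ℝ) :
    frameMap t n b t₂ n₂ b₂ v = -(g t v • t₂) + g n v • n₂ + g b v • b₂ := rfl

lemma g_comm (v w : Fin 3 → ℝ) : g v w = g w v := by
  simp only [g]; ring

/-- Expansion of the metric in an orthonormal frame. If `A` has rows `t, n, b` and
`η = diag(-1, 1, 1)`, orthonormality says `A (η Aᵀ η) = 1`; commuting the two inverse factors gives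
`η Aᵀ η A = 1`, that is, `Aᵀ η A = η`. -/
lemma g_expand {t n b : Fin 3 → ℝ} (htt : g t t = -1) (hnn : g n n = 1) (hbb : g b b = 1)
    (htn : g t n = 0) (htb : g t b = 0) (hnb : g n b = 0) (v w : Fin 3 → ℝ) :
    -(g t v * g t w) + g n v * g n w + g b v * g b w = g v w := by
  let A : Matrix (Fin 3) (Fin 3) ℝ := !![t 0, t 1, t 2; n 0, n 1, n 2; b 0, b 1, b 2]
  -- `C` is `η Aᵀ η`.
  let C : Matrix (Fin 3) (Fin 3) ℝ := !![t 0, -n 0, -b 0; -t 1, n 1, b 1; -t 2, n 2, b 2]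
  simp only [g] at htt hnn hbb htn htb hnb
  have hAC : A * C = 1 := by
    ext i j
    fin_cases i <;> fin_cases j <;>
      simp [A, C, Matrix.mul_apply, Fin.sum_univ_three] <;> linarith
  have hCA : C * A = 1 := mul_eq_one_comm.mp hAC
  have e (i j : Fin 3) : (C * A) i j = (1 : Matrix (Fin 3) (Fin 3) ℝ) i j := by rw [hCA]
  have e00 := e 0 0
  have e01 := e 0 1
  have e02 := e 0 2
  have e11 := e 1 1
  have e12 := e 1 2
  have e22 := e 2 2
  simp [A, C, Matrix.mul_apply, Fin.sum_univ_three] at e00 e01 e02 e11 e12 e22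
  simp only [g]
  linear_combination (-(v 0 * w 0)) * e00 + (v 0 * w 1 + v 1 * w 0) * e01
    + (v 0 * w 2 + v 2 * w 0) * e02 + v 1 * w 1 * e11 + (v 1 * w 2 + v 2 * w 1) * e12
    + v 2 * w 2 * e22

lemma g_frameMap {t n b t₂ n₂ b₂ : Fin 3 → ℝ}
    (htt : g t t = -1) (hnn : g n n = 1) (hbb : g b b = 1)
    (htn : g t n = 0) (htb : g t b = 0) (hnb : g n b = 0)
    (htt₂ : g t₂ t₂ = -1) (hnn₂ : g n₂ n₂ = 1) (hbb₂ : g b₂ b₂ = 1)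
    (htn₂ : g t₂ n₂ = 0) (htb₂ : g t₂ b₂ = 0) (hnb₂ : g n₂ b₂ = 0) (v w : Fin 3 → ℝ) :
    g (frameMap t n b t₂ n₂ b₂ v) (frameMap t n b t₂ n₂ b₂ w) = g v w := by
  rw [← g_expand htt hnn hbb htn htb hnb v w, frameMap_apply, frameMap_apply]
  generalize g t v = a, g n v = p, g b v = c, g t w = a', g n w = p', g b w = c'
  simp only [g, Pi.add_apply, Pi.neg_apply, Pi.smul_apply, smul_eq_mul] at *
  linear_combination a * a' * htt₂ + p * p' * hnn₂ + c * c' * hbb₂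
    - (a * p' + p * a') * htn₂ - (a * c' + c * a') * htb₂ + (p * c' + c * p') * hnb₂

lemma HasDerivAt.g_left {X : ℝ → Fin 3 → ℝ} {X' : Fin 3 → ℝ} {s : ℝ} (h : HasDerivAt X X' s)
    (v : Fin 3 → ℝ) : HasDerivAt (fun u => g (X u) v) (g X' v) s := by
  have h' := hasDerivAt_pi.mp h
  exact (((h' 0).mul_const (v 0)).neg.add ((h' 1).mul_const (v 1))).add ((h' 2).mul_const (v 2))

/-- The map carrying one Frenet frame to the other does not depend on the parameter: in its
derivative the terms with `κ` and with `τ` cancel in pairs. -/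
lemma frameMap_const {κ τ : ℝ → ℝ} {T N B T₂ N₂ B₂ : ℝ → Fin 3 → ℝ}
    (hT : ∀ s, HasDerivAt T (κ s • N s) s)
    (hN : ∀ s, HasDerivAt N (κ s • T s + τ s • B s) s)
    (hB : ∀ s, HasDerivAt B (-(τ s) • N s) s)
    (hT₂ : ∀ s, HasDerivAt T₂ (κ s • N₂ s) s)
    (hN₂ : ∀ s, HasDerivAt N₂ (κ s • T₂ s + τ s • B₂ s) s)
    (hB₂ : ∀ s, HasDerivAt B₂ (-(τ s) • N₂ s) s) (s s' : ℝ) :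
    frameMap (T s) (N s) (B s) (T₂ s) (N₂ s) (B₂ s) =
      frameMap (T s') (N s') (B s') (T₂ s') (N₂ s') (B₂ s') := by
  refine LinearMap.ext fun v => ?_
  have key (u : ℝ) : HasDerivAt
      (fun u => frameMap (T u) (N u) (B u) (T₂ u) (N₂ u) (B₂ u) v) 0 u := by
    have h := ((((hT u).g_left v).smul (hT₂ u)).neg.add (((hN u).g_left v).smul (hN₂ u))).add
      (((hB u).g_left v).smul (hB₂ u))
    refine h.congr_deriv ?_
    ext i
    simp only [g, Pi.add_apply, Pi.neg_apply, Pi.smul_apply, smul_eq_mul, Pi.zero_apply]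
    ring
  exact is_const_of_deriv_eq_zero (fun u => (key u).differentiableAt) (fun u => (key u).deriv) s s'

/-- A curve whose `deriv` is everywhere time-like is differentiable: the junk value `deriv = 0` at
a point of non-differentiability is excluded by `g 0 0 = 0`. -/
lemma hasDerivAt_of_timelike {φ X : ℝ → Fin 3 → ℝ} (hφ : ∀ s, deriv φ s = X s)
    (hX : ∀ s, g (X s) (X s) = -1) (s : ℝ) : HasDerivAt φ (X s) s := by
  rw [← hφ s]
  refine (differentiableAt_of_deriv_ne_zero fun h0 => ?_).hasDerivAt
  have h := hX s
  rw [← hφ s, h0] at h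
  simp [g] at h

/-- Theorem 3.2 (uniqueness part): two unit-speed time-like curves with the same
curvature and torsion differ by an isometry of Minkowski 3-space (a `g`-preserving
linear map followed by a translation). -/
theorem uniqueness_timelike_curve (κ τ : ℝ → ℝ) (hκ : Continuous κ) (hτ : Continuous τ)
    (ψ T N B ψ₂ T₂ N₂ B₂ : ℝ → Fin 3 → ℝ)
    (hψ : ∀ s, deriv ψ s = T s) (hψ₂ : ∀ s, deriv ψ₂ s = T₂ s)
    (hT : Differentiable ℝ T) (hN : Differentiable ℝ N) (hB : Differentiable ℝ B)
    (hT₂ : Differentiable ℝ T₂) (hN₂ : Differentiable ℝ N₂) (hB₂ : Differentiable ℝ B₂)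
    (frenet1 : ∀ s, deriv T s = κ s • N s)
    (frenet2 : ∀ s, deriv N s = κ s • T s + τ s • B s)
    (frenet3 : ∀ s, deriv B s = -(τ s) • N s)
    (frenet1₂ : ∀ s, deriv T₂ s = κ s • N₂ s)
    (frenet2₂ : ∀ s, deriv N₂ s = κ s • T₂ s + τ s • B₂ s)
    (frenet3₂ : ∀ s, deriv B₂ s = -(τ s) • N₂ s)
    (hTT : ∀ s, g (T s) (T s) = -1)
    (hNN : ∀ s, g (N s) (N s) = 1)
    (hBB : ∀ s, g (B s) (B s) = 1)
    (hTN : ∀ s, g (T s) (N s) = 0)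
    (hTB : ∀ s, g (T s) (B s) = 0)
    (hNB : ∀ s, g (N s) (B s) = 0)
    (hTT₂ : ∀ s, g (T₂ s) (T₂ s) = -1)
    (hNN₂ : ∀ s, g (N₂ s) (N₂ s) = 1)
    (hBB₂ : ∀ s, g (B₂ s) (B₂ s) = 1)
    (hTN₂ : ∀ s, g (T₂ s) (N₂ s) = 0)
    (hTB₂ : ∀ s, g (T₂ s) (B₂ s) = 0)
    (hNB₂ : ∀ s, g (N₂ s) (B₂ s) = 0) :
    ∃ (L : (Fin 3 → ℝ) →ₗ[ℝ] (Fin 3 → ℝ)) (c : Fin 3 → ℝ),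
      (∀ v w : Fin 3 → ℝ, g (L v) (L w) = g v w) ∧
      (∀ s, ψ₂ s = L (ψ s) + c) := by
  have dT (s) : HasDerivAt T (κ s • N s) s := frenet1 s ▸ (hT s).hasDerivAt
  have dN (s) : HasDerivAt N (κ s • T s + τ s • B s) s := frenet2 s ▸ (hN s).hasDerivAt
  have dB (s) : HasDerivAt B (-(τ s) • N s) s := frenet3 s ▸ (hB s).hasDerivAt
  have dT₂ (s) : HasDerivAt T₂ (κ s • N₂ s) s := frenet1₂ s ▸ (hT₂ s).hasDerivAt
  have dN₂ (s) : HasDerivAt N₂ (κ s • T₂ s + τ s • B₂ s) s := frenet2₂ s ▸ (hN₂ s).hasDerivAt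
  have dB₂ (s) : HasDerivAt B₂ (-(τ s) • N₂ s) s := frenet3₂ s ▸ (hB₂ s).hasDerivAt
  let L := frameMap (T 0) (N 0) (B 0) (T₂ 0) (N₂ 0) (B₂ 0)
  have hLT (s : ℝ) : L (T s) = T₂ s := by
    have h : L = frameMap (T s) (N s) (B s) (T₂ s) (N₂ s) (B₂ s) :=
      frameMap_const dT dN dB dT₂ dN₂ dB₂ 0 s
    rw [h, frameMap_apply, hTT, g_comm (N s), g_comm (B s), hTN, hTB]
    simp
  have hd (s : ℝ) : HasDerivAt (fun u => ψ₂ u - L (ψ u)) 0 s := by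
    have h := (hasDerivAt_of_timelike hψ₂ hTT₂ s).sub
      ((LinearMap.toContinuousLinearMap L).hasFDerivAt.comp_hasDerivAt s
        (hasDerivAt_of_timelike hψ hTT s))
    refine h.congr_deriv ?_
    simp [hLT]
  refine ⟨L, ψ₂ 0 - L (ψ 0), g_frameMap (hTT 0) (hNN 0) (hBB 0) (hTN 0) (hTB 0) (hNB 0)
    (hTT₂ 0) (hNN₂ 0) (hBB₂ 0) (hTN₂ 0) (hTB₂ 0) (hNB₂ 0), fun s => ?_⟩
  have h : ψ₂ s - L (ψ s) = ψ₂ 0 - L (ψ 0) :=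
    is_const_of_deriv_eq_zero (fun u => (hd u).differentiableAt) (fun u => (hd u).deriv) s 0
  rw [← h]
  abel
end
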